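/- If a and b are terms of Λ× of the same type and a = b is not provable in Λ×, then for every two terms c and d of the same type of Λ× one can construct type-instances a′ of a and b′ of b, terms h, h₁, …, hₙ (n ≥ 0), and find variables x₁, …, x_m (m ≥ 0) and a natural number i such that π^i(h λx₁…x_m.a′)h₁…hₙ = c and π^i(h λx₁…x_m.b′)h₁…hₙ = d are provable in Λ×. -/

import Mathlib

set_option autoImplicit false

/-- Types of the typed lambda calculus Λ× : generated from atomic types (`ν`) and the
constant atomic type `T` by `→` and `×`. -/
inductive Tyx (ν : Type) : Type
  | atom : ν → Tyx ν
  | unit : Tyx ν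
  | arrow : Tyx ν → Tyx ν → Tyx ν
  | prod : Tyx ν → Tyx ν → Tyx ν

/-- A typing context. -/
abbrev Ctxx (ν : Type) : Type := List (Tyx ν)

/-- Typed de Bruijn variables. -/
inductive Varx {ν : Type} : Ctxx ν → Tyx ν → Type
  | vz {Γ : Ctxx ν} {A : Tyx ν} : Varx (A :: Γ) A
  | vs {Γ : Ctxx ν} {A B : Tyx ν} : Varx Γ A → Varx (B :: Γ) A

/-- Typed terms of Λ×. -/
inductive Tmx {ν : Type} : Ctxx ν → Tyx ν → Type
  | var {Γ : Ctxx ν} {A : Tyx ν} : Varx Γ A → Tmx Γ A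
  | app {Γ : Ctxx ν} {A B : Tyx ν} : Tmx Γ (Tyx.arrow A B) → Tmx Γ A → Tmx Γ B
  | lam {Γ : Ctxx ν} {A B : Tyx ν} : Tmx (A :: Γ) B → Tmx Γ (Tyx.arrow A B)
  | pair {Γ : Ctxx ν} {A B : Tyx ν} : Tmx Γ A → Tmx Γ B → Tmx Γ (Tyx.prod A B)
  | p1 {Γ : Ctxx ν} {A B : Tyx ν} : Tmx Γ (Tyx.prod A B) → Tmx Γ A
  | p2 {Γ : Ctxx ν} {A B : Tyx ν} : Tmx Γ (Tyx.prod A B) → Tmx Γ B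
  | k {Γ : Ctxx ν} : Tmx Γ Tyx.unit

/-- Renamings between contexts. -/
def Renx {ν : Type} (Γ Δ : Ctxx ν) : Type := ∀ A : Tyx ν, Varx Γ A → Varx Δ A

def Renx.ext {ν : Type} {Γ Δ : Ctxx ν} (ρ : Renx Γ Δ) (A : Tyx ν) :
    ∀ B : Tyx ν, Varx (A :: Γ) B → Varx (A :: Δ) B
  | _, .vz => .vz
  | _, .vs w => .vs (ρ _ w)

def Tmx.rename {ν : Type} : ∀ {Γ Δ : Ctxx ν} {A : Tyx ν}, Renx Γ Δ → Tmx Γ A → Tmx Δ A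
  | _, _, _, ρ, .var v => .var (ρ _ v)
  | _, _, _, ρ, .app f a => .app (f.rename ρ) (a.rename ρ)
  | _, _, _, ρ, .lam b => .lam (b.rename (Renx.ext ρ _))
  | _, _, _, ρ, .pair a b => .pair (a.rename ρ) (b.rename ρ)
  | _, _, _, ρ, .p1 a => .p1 (a.rename ρ)
  | _, _, _, ρ, .p2 a => .p2 (a.rename ρ)
  | _, _, _, _, .k => .k

/-- Simultaneous substitutions. -/
def Substx {ν : Type} (Γ Δ : Ctxx ν) : Type := ∀ A : Tyx ν, Varx Γ A → Tmx Δ A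

def Substx.ext {ν : Type} {Γ Δ : Ctxx ν} (σ : Substx Γ Δ) (A : Tyx ν) :
    ∀ B : Tyx ν, Varx (A :: Γ) B → Tmx (A :: Δ) B
  | _, .vz => .var .vz
  | _, .vs w => (σ _ w).rename (fun _ => Varx.vs)

def Tmx.subst {ν : Type} : ∀ {Γ Δ : Ctxx ν} {A : Tyx ν}, Substx Γ Δ → Tmx Γ A → Tmx Δ A
  | _, _, _, σ, .var v => σ _ v
  | _, _, _, σ, .app f a => .app (f.subst σ) (a.subst σ)
  | _, _, _, σ, .lam b => .lam (b.subst (Substx.ext σ _))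
  | _, _, _, σ, .pair a b => .pair (a.subst σ) (b.subst σ)
  | _, _, _, σ, .p1 a => .p1 (a.subst σ)
  | _, _, _, σ, .p2 a => .p2 (a.subst σ)
  | _, _, _, _, .k => .k

def Substx.cons {ν : Type} {Γ Δ : Ctxx ν} {A : Tyx ν} (b : Tmx Δ A) (σ : Substx Γ Δ) :
    ∀ B : Tyx ν, Varx (A :: Γ) B → Tmx Δ B
  | _, .vz => b
  | _, .vs w => σ _ w

/-- Substitution of a single term for the last variable: `a[b/x]`. -/
def Tmx.subst1 {ν : Type} {Γ : Ctxx ν} {A B : Tyx ν} (a : Tmx (A :: Γ) B) (b : Tmx Γ A) :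
    Tmx Γ B :=
  a.subst (Substx.cons b (fun _ v => .var v))

/-- The theory Λ× of βη-equality with surjective pairing and terminal type `T`. -/
inductive Eqvx {ν : Type} : ∀ {Γ : Ctxx ν} {A : Tyx ν}, Tmx Γ A → Tmx Γ A → Prop
  | refl {Γ : Ctxx ν} {A : Tyx ν} (a : Tmx Γ A) : Eqvx a a
  | symm {Γ : Ctxx ν} {A : Tyx ν} {a b : Tmx Γ A} : Eqvx a b → Eqvx b a
  | trans {Γ : Ctxx ν} {A : Tyx ν} {a b c : Tmx Γ A} : Eqvx a b → Eqvx b c → Eqvx a c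
  | congApp {Γ : Ctxx ν} {A B : Tyx ν} {f g : Tmx Γ (Tyx.arrow A B)} {a b : Tmx Γ A} :
      Eqvx f g → Eqvx a b → Eqvx (.app f a) (.app g b)
  | congLam {Γ : Ctxx ν} {A B : Tyx ν} {a b : Tmx (A :: Γ) B} :
      Eqvx a b → Eqvx (.lam a) (.lam b)
  | congPair {Γ : Ctxx ν} {A B : Tyx ν} {a a' : Tmx Γ A} {b b' : Tmx Γ B} :
      Eqvx a a' → Eqvx b b' → Eqvx (.pair a b) (.pair a' b')
  | congP1 {Γ : Ctxx ν} {A B : Tyx ν} {a b : Tmx Γ (Tyx.prod A B)} :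
      Eqvx a b → Eqvx (.p1 a) (.p1 b)
  | congP2 {Γ : Ctxx ν} {A B : Tyx ν} {a b : Tmx Γ (Tyx.prod A B)} :
      Eqvx a b → Eqvx (.p2 a) (.p2 b)
  | beta {Γ : Ctxx ν} {A B : Tyx ν} (a : Tmx (A :: Γ) B) (b : Tmx Γ A) :
      Eqvx (.app (.lam a) b) (a.subst1 b)
  | eta {Γ : Ctxx ν} {A B : Tyx ν} (a : Tmx Γ (Tyx.arrow A B)) :
      Eqvx (.lam (.app (a.rename (fun _ => Varx.vs)) (.var .vz))) a
  | prodBeta1 {Γ : Ctxx ν} {A B : Tyx ν} (a : Tmx Γ A) (b : Tmx Γ B) :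
      Eqvx (.p1 (.pair a b)) a
  | prodBeta2 {Γ : Ctxx ν} {A B : Tyx ν} (a : Tmx Γ A) (b : Tmx Γ B) :
      Eqvx (.p2 (.pair a b)) b
  | prodEta {Γ : Ctxx ν} {A B : Tyx ν} (c : Tmx Γ (Tyx.prod A B)) :
      Eqvx (.pair (.p1 c) (.p2 c)) c
  | unit {Γ : Ctxx ν} (a : Tmx Γ Tyx.unit) : Eqvx a .k

def Varx.elim0 {ν : Type} {A : Tyx ν} {C : Sort*} : Varx ([] : Ctxx ν) A → C :=
  fun v => nomatch v

/-- Weakening of a closed term into an arbitrary context. -/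
def Tmx.wk {ν : Type} {Δ : Ctxx ν} {A : Tyx ν} (t : Tmx ([] : Ctxx ν) A) : Tmx Δ A :=
  t.rename (fun _ v => v.elim0)

/-- One-step reduction of types of Λ× (replacement of a redex subtype by its
contractum). -/
inductive TyStep {ν : Type} : Tyx ν → Tyx ν → Prop
  | arrProd (A B₁ B₂ : Tyx ν) :
      TyStep (.arrow A (.prod B₁ B₂)) (.prod (.arrow A B₁) (.arrow A B₂))
  | prodArr (A₁ A₂ B : Tyx ν) :
      TyStep (.arrow (.prod A₁ A₂) B) (.arrow A₁ (.arrow A₂ B))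
  | prodAssoc (A B C : Tyx ν) :
      TyStep (.prod A (.prod B C)) (.prod (.prod A B) C)
  | arrUnit (A : Tyx ν) : TyStep (.arrow A .unit) .unit
  | unitArr (B : Tyx ν) : TyStep (.arrow .unit B) B
  | prodUnit (A : Tyx ν) : TyStep (.prod A .unit) A
  | unitProd (A : Tyx ν) : TyStep (.prod .unit A) A
  | arrL {A A' : Tyx ν} (B : Tyx ν) : TyStep A A' → TyStep (.arrow A B) (.arrow A' B)
  | arrR (A : Tyx ν) {B B' : Tyx ν} : TyStep B B' → TyStep (.arrow A B) (.arrow A B')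
  | prodL {A A' : Tyx ν} (B : Tyx ν) : TyStep A A' → TyStep (.prod A B) (.prod A' B)
  | prodR (A : Tyx ν) {B B' : Tyx ν} : TyStep B B' → TyStep (.prod A B) (.prod A B')

/-- A type is in product normal form iff none of its subtypes is a redex, i.e. iff no
type reduction applies to it. -/
def PNF {ν : Type} (A : Tyx ν) : Prop := ∀ B : Tyx ν, ¬ TyStep A B

/-- Substitution of types for the atomic types, on types of Λ×. -/
def Tyx.substA {ν : Type} (σ : ν → Tyx ν) : Tyx ν → Tyx ν
  | .atom v => σ v
  | .unit => .unit
  | .arrow A B => .arrow (A.substA σ) (B.substA σ)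
  | .prod A B => .prod (A.substA σ) (B.substA σ)

def Varx.substA {ν : Type} (σ : ν → Tyx ν) :
    ∀ {Γ : Ctxx ν} {A : Tyx ν}, Varx Γ A → Varx (Γ.map (Tyx.substA σ)) (A.substA σ)
  | _, _, .vz => .vz
  | _, _, .vs v => .vs (v.substA σ)

/-- Substitution of types for the atomic types, on terms of Λ× : type-instances. -/
def Tmx.substA {ν : Type} (σ : ν → Tyx ν) :
    ∀ {Γ : Ctxx ν} {A : Tyx ν}, Tmx Γ A → Tmx (Γ.map (Tyx.substA σ)) (A.substA σ)
  | _, _, .var v => .var (v.substA σ)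
  | _, _, .app f a => .app (f.substA σ) (a.substA σ)
  | _, _, .lam b => .lam (b.substA σ)
  | _, _, .pair a b => .pair (a.substA σ) (b.substA σ)
  | _, _, .p1 a => .p1 (a.substA σ)
  | _, _, .p2 a => .p2 (a.substA σ)
  | _, _, .k => .k

/-- `Tyx.arrs [A₁, …, Aₘ] B = Aₘ → (… → (A₁ → B))` : the type of `λx₁…xₘ.a`. -/
def Tyx.arrs {ν : Type} : Ctxx ν → Tyx ν → Tyx ν
  | [], B => B
  | A :: Γ, B => Tyx.arrs Γ (Tyx.arrow A B)

/-- λ-abstracting all the free variables of a term of Λ×. -/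
def Tmx.lamAll {ν : Type} : ∀ {Γ : Ctxx ν} {A : Tyx ν}, Tmx Γ A → Tmx [] (Tyx.arrs Γ A)
  | [], _, a => a
  | _ :: Γ, _, a => Tmx.lamAll (Γ := Γ) (Tmx.lam a)

/-- `Tyx.arrsR [B₁, …, Bₙ] C = B₁ → (… → (Bₙ → C))`. -/
def Tyx.arrsR {ν : Type} : List (Tyx ν) → Tyx ν → Tyx ν
  | [], C => C
  | B :: Bs, C => Tyx.arrow B (Tyx.arrsR Bs C)

/-- A list of terms `h₁ : B₁, …, hₙ : Bₙ` in context `Δ`. -/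
inductive HListx {ν : Type} (Δ : Ctxx ν) : List (Tyx ν) → Type
  | nil : HListx Δ []
  | cons {B : Tyx ν} {Bs : List (Tyx ν)} : Tmx Δ B → HListx Δ Bs → HListx Δ (B :: Bs)

def HListx.apps {ν : Type} {Δ : Ctxx ν} :
    ∀ {Bs : List (Tyx ν)} {C : Tyx ν}, HListx Δ Bs → Tmx Δ (Tyx.arrsR Bs C) → Tmx Δ C
  | _, _, .nil, t => t
  | _, _, .cons h hs, t => HListx.apps hs (t.app h)

/-- Iterated application `t h₁ … hₙ`. -/
def Tmx.apps {ν : Type} {Δ : Ctxx ν} {Bs : List (Tyx ν)} {C : Tyx ν}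
    (t : Tmx Δ (Tyx.arrsR Bs C)) (hs : HListx Δ Bs) : Tmx Δ C :=
  hs.apps t

/-- `PiStep n i t u` : regarding the type of `t` as an iterated product
`×_{j=1}^n A_j` (left-nested, `n ≥ 1`), `u` is the `i`-th projection `π^i t`
(for `1 ≤ i ≤ n`): `π^i t = t` if `n = 1`, and for `n > 1`, `πⁿ t = p² t` and
`π^i t = π^i (p¹ t)` for `i < n`. -/
inductive PiStep {ν : Type} {Γ : Ctxx ν} : ℕ → ℕ → ∀ {A B : Tyx ν}, Tmx Γ A → Tmx Γ B → Prop
  | one {A : Tyx ν} (t : Tmx Γ A) : PiStep 1 1 t t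
  | last {n : ℕ} {A B : Tyx ν} (t : Tmx Γ (Tyx.prod A B)) : PiStep (n + 1) (n + 1) t (.p2 t)
  | lower {n i : ℕ} {A B C : Tyx ν} (t : Tmx Γ (Tyx.prod A B)) {u : Tmx Γ C} :
      PiStep n i (.p1 t) u → PiStep (n + 1) i t u

namespace BoehmX

attribute [reducible] Renx Substx

variable {ν : Type}

/-! ### Substitution algebra -/

theorem ext_comp_ren {Γ Δ Θ : Ctxx ν} (ρ : Renx Γ Δ) (ρ' : Renx Δ Θ) (A : Tyx ν) :
    (fun B v => Renx.ext ρ' A B (Renx.ext ρ A B v)) = Renx.ext (fun B v => ρ' B (ρ B v)) A := by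
  funext B v; cases v <;> rfl

theorem rename_rename {Γ Δ Θ : Ctxx ν} {A : Tyx ν} (t : Tmx Γ A) (ρ : Renx Γ Δ) (ρ' : Renx Δ Θ) :
    (t.rename ρ).rename ρ' = t.rename (fun B v => ρ' B (ρ B v)) := by
  induction t generalizing Δ Θ with
  | lam b ih => simp only [Tmx.rename, ih]; rw [ext_comp_ren]
  | _ => simp_all [Tmx.rename]

theorem subst_rename {Γ Δ Θ : Ctxx ν} {A : Tyx ν} (t : Tmx Γ A) (ρ : Renx Γ Δ) (θ : Substx Δ Θ) :
    (t.rename ρ).subst θ = t.subst (fun B v => θ B (ρ B v)) := by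
  induction t generalizing Δ Θ with
  | lam b ih =>
    simp only [Tmx.rename, Tmx.subst, ih]
    congr 2
    funext B v; cases v <;> rfl
  | _ => simp_all [Tmx.rename, Tmx.subst]

theorem rename_subst {Γ Δ Θ : Ctxx ν} {A : Tyx ν} (t : Tmx Γ A) (θ : Substx Γ Δ) (ρ : Renx Δ Θ) :
    (t.subst θ).rename ρ = t.subst (fun B v => (θ B v).rename ρ) := by
  induction t generalizing Δ Θ with
  | lam b ih =>
    simp only [Tmx.rename, Tmx.subst, ih]
    congr 2
    funext B v; cases v
    · rfl
    · simp only [Substx.ext, rename_rename]; rfl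
  | _ => simp_all [Tmx.rename, Tmx.subst]

theorem subst_subst {Γ Δ Θ : Ctxx ν} {A : Tyx ν} (t : Tmx Γ A) (θ : Substx Γ Δ) (τ : Substx Δ Θ) :
    (t.subst θ).subst τ = t.subst (fun B v => (θ B v).subst τ) := by
  induction t generalizing Δ Θ with
  | lam b ih =>
    simp only [Tmx.subst, ih]
    congr 2
    funext B v; cases v
    · rfl
    · simp only [Substx.ext, rename_subst, subst_rename]
  | _ => simp_all [Tmx.subst]

theorem subst_var {Γ : Ctxx ν} {A : Tyx ν} (t : Tmx Γ A) :
    t.subst (fun _ v => .var v) = t := by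
  induction t with
  | @lam Γ A B b ih =>
    simp only [Tmx.subst]
    have : Substx.ext (fun (B : Tyx ν) (v : Varx Γ B) => Tmx.var v) A = fun _ v => .var v := by
      funext B v; cases v <;> rfl
    rw [this, ih]
  | _ => simp_all [Tmx.subst]

theorem rename_eq_subst {Γ Δ : Ctxx ν} {A : Tyx ν} (t : Tmx Γ A) (ρ : Renx Γ Δ) :
    t.rename ρ = t.subst (fun B v => .var (ρ B v)) := by
  rw [← subst_var (t.rename ρ), subst_rename]

theorem rename_vs_subst1 {Γ : Ctxx ν} {A B : Tyx ν} (t : Tmx Γ A) (u : Tmx Γ B) :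
    (t.rename (fun _ => Varx.vs)).subst (Substx.cons u (fun _ v => .var v)) = t := by
  rw [subst_rename]; exact subst_var t

theorem rename_vs_subst_ext {Γ Δ : Ctxx ν} {A B : Tyx ν} (t : Tmx Γ A) (θ : Substx Γ Δ) :
    (t.rename (fun _ => Varx.vs)).subst (Substx.ext θ B)
      = (t.subst θ).rename (fun _ => Varx.vs) := by
  rw [subst_rename, rename_subst]; rfl

theorem rename_vs_rename_ext {Γ Δ : Ctxx ν} {A B : Tyx ν} (t : Tmx Γ A) (ρ : Renx Γ Δ) :
    (t.rename (fun _ => Varx.vs)).rename (Renx.ext ρ B)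
      = (t.rename ρ).rename (fun _ => Varx.vs) := by
  rw [rename_rename, rename_rename]; rfl

theorem rename_subst1 {Γ Δ : Ctxx ν} {A B : Tyx ν} (a : Tmx (A :: Γ) B) (b : Tmx Γ A)
    (ρ : Renx Γ Δ) :
    (a.subst1 b).rename ρ = (a.rename (Renx.ext ρ A)).subst1 (b.rename ρ) := by
  unfold Tmx.subst1
  rw [rename_subst, subst_rename]
  congr 1
  funext C v; cases v <;> rfl

theorem subst_ext_subst1 {Γ Δ : Ctxx ν} {A B : Tyx ν} (a : Tmx (A :: Γ) B) (b : Tmx Δ A)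
    (θ : Substx Γ Δ) :
    (a.subst (Substx.ext θ A)).subst1 b = a.subst (Substx.cons b θ) := by
  unfold Tmx.subst1
  rw [subst_subst]
  congr 1
  funext C v; cases v
  · rfl
  · simp only [Substx.ext, Substx.cons]; exact rename_vs_subst1 _ _

theorem eqv_rename {Γ Δ : Ctxx ν} {A : Tyx ν} {a b : Tmx Γ A} (h : Eqvx a b) (ρ : Renx Γ Δ) :
    Eqvx (a.rename ρ) (b.rename ρ) := by
  induction h generalizing Δ with
  | refl a => exact .refl _
  | symm _ ih => exact .symm (ih ρ)
  | trans _ _ ih1 ih2 => exact .trans (ih1 ρ) (ih2 ρ)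
  | congApp _ _ ih1 ih2 => exact .congApp (ih1 ρ) (ih2 ρ)
  | congLam _ ih => exact .congLam (ih _)
  | congPair _ _ ih1 ih2 => exact .congPair (ih1 ρ) (ih2 ρ)
  | congP1 _ ih => exact .congP1 (ih ρ)
  | congP2 _ ih => exact .congP2 (ih ρ)
  | beta a b => rw [rename_subst1]; exact .beta _ _
  | eta a => simp only [Tmx.rename, rename_vs_rename_ext]; exact .eta _
  | prodBeta1 a b => exact .prodBeta1 _ _
  | prodBeta2 a b => exact .prodBeta2 _ _
  | prodEta c => exact .prodEta _
  | unit a => exact .unit _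

/-! ### Type instances -/

theorem substA_rename (s : ν → Tyx ν) {Γ Δ : Ctxx ν} {A : Tyx ν} (t : Tmx Γ A) (ρ : Renx Γ Δ)
    (ρ' : Renx (Γ.map (Tyx.substA s)) (Δ.map (Tyx.substA s)))
    (h : ∀ B (v : Varx Γ B), ρ' _ (v.substA s) = (ρ B v).substA s) :
    (t.rename ρ).substA s = (t.substA s).rename ρ' := by
  induction t generalizing Δ with
  | lam b ih =>
    simp only [Tmx.rename, Tmx.substA]
    congr 1
    apply ih
    intro B v
    cases v with
    | vz => rfl
    | vs w => simp only [Varx.substA, Renx.ext, h]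
  | var v => simp only [Tmx.rename, Tmx.substA, h]
  | k => rfl
  | app f a ih1 ih2 => exact congrArg₂ Tmx.app (ih1 ρ ρ' h) (ih2 ρ ρ' h)
  | pair f a ih1 ih2 => exact congrArg₂ Tmx.pair (ih1 ρ ρ' h) (ih2 ρ ρ' h)
  | p1 a ih => exact congrArg Tmx.p1 (ih ρ ρ' h)
  | p2 a ih => exact congrArg Tmx.p2 (ih ρ ρ' h)

theorem substA_subst (s : ν → Tyx ν) {Γ Δ : Ctxx ν} {A : Tyx ν} (t : Tmx Γ A) (θ : Substx Γ Δ)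
    (θ' : Substx (Γ.map (Tyx.substA s)) (Δ.map (Tyx.substA s)))
    (h : ∀ B (v : Varx Γ B), θ' _ (v.substA s) = (θ B v).substA s) :
    (t.subst θ).substA s = (t.substA s).subst θ' := by
  induction t generalizing Δ with
  | lam b ih =>
    simp only [Tmx.subst, Tmx.substA]
    congr 1
    apply ih
    intro B v
    cases v with
    | vz => rfl
    | vs w =>
      simp only [Varx.substA, Substx.ext, h]
      exact (substA_rename s (θ _ w) (fun _ => Varx.vs) (fun _ => Varx.vs) (fun _ _ => rfl)).symm
  | var v => simp only [Tmx.subst, Tmx.substA, h]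
  | k => rfl
  | app f a ih1 ih2 => exact congrArg₂ Tmx.app (ih1 θ θ' h) (ih2 θ θ' h)
  | pair f a ih1 ih2 => exact congrArg₂ Tmx.pair (ih1 θ θ' h) (ih2 θ θ' h)
  | p1 a ih => exact congrArg Tmx.p1 (ih θ θ' h)
  | p2 a ih => exact congrArg Tmx.p2 (ih θ θ' h)

theorem eqv_substA (s : ν → Tyx ν) {Γ : Ctxx ν} {A : Tyx ν} {a b : Tmx Γ A} (h : Eqvx a b) :
    Eqvx (a.substA s) (b.substA s) := by
  induction h with
  | refl a => exact .refl _
  | symm _ ih => exact .symm ih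
  | trans _ _ ih1 ih2 => exact .trans ih1 ih2
  | congApp _ _ ih1 ih2 => exact .congApp ih1 ih2
  | congLam _ ih => exact .congLam ih
  | congPair _ _ ih1 ih2 => exact .congPair ih1 ih2
  | congP1 _ ih => exact .congP1 ih
  | congP2 _ ih => exact .congP2 ih
  | beta a b =>
    have : (a.subst1 b).substA s = (a.substA s).subst1 (b.substA s) := by
      apply substA_subst
      intro B v
      cases v <;> rfl
    rw [this]; exact .beta _ _
  | @eta Γ A B a =>
    have e := substA_rename s a (fun _ => Varx.vs (B := A)) (fun _ => Varx.vs) (fun _ _ => rfl)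
    exact (Eqvx.congLam (.congApp (e ▸ .refl _) (.refl _))).trans (.eta (a.substA s))
  | prodBeta1 a b => exact .prodBeta1 _ _
  | prodBeta2 a b => exact .prodBeta2 _ _
  | prodEta c => exact .prodEta _
  | unit a => exact .unit _

/-! ### Long normal forms -/

/-- `IsN true t`: `t` is neutral; `IsN false t`: `t` is a long normal form. -/
inductive IsN : Bool → ∀ {Γ : Ctxx ν} {A : Tyx ν}, Tmx Γ A → Prop
  | var {Γ : Ctxx ν} {A : Tyx ν} (v : Varx Γ A) : IsN true (Tmx.var v)
  | app {Γ : Ctxx ν} {A B : Tyx ν} {f : Tmx Γ (Tyx.arrow A B)} {a : Tmx Γ A} :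
      IsN true f → IsN false a → IsN true (Tmx.app f a)
  | p1 {Γ : Ctxx ν} {A B : Tyx ν} {a : Tmx Γ (Tyx.prod A B)} : IsN true a → IsN true (Tmx.p1 a)
  | p2 {Γ : Ctxx ν} {A B : Tyx ν} {a : Tmx Γ (Tyx.prod A B)} : IsN true a → IsN true (Tmx.p2 a)
  | ne {Γ : Ctxx ν} {x : ν} {a : Tmx Γ (Tyx.atom x)} : IsN true a → IsN false a
  | lam {Γ : Ctxx ν} {A B : Tyx ν} {b : Tmx (A :: Γ) B} : IsN false b → IsN false (Tmx.lam b)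
  | pair {Γ : Ctxx ν} {A B : Tyx ν} {a : Tmx Γ A} {b : Tmx Γ B} :
      IsN false a → IsN false b → IsN false (Tmx.pair a b)
  | k {Γ : Ctxx ν} : IsN false (Tmx.k (Γ := Γ))

theorem isN_rename {m : Bool} {Γ Δ : Ctxx ν} {A : Tyx ν} {t : Tmx Γ A} (h : IsN m t)
    (ρ : Renx Γ Δ) : IsN m (t.rename ρ) := by
  induction h generalizing Δ with
  | var v => exact .var _
  | app _ _ ih1 ih2 => exact .app (ih1 ρ) (ih2 ρ)
  | p1 _ ih => exact .p1 (ih ρ)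
  | p2 _ ih => exact .p2 (ih ρ)
  | ne _ ih => exact .ne (ih ρ)
  | lam _ ih => exact .lam (ih _)
  | pair _ _ ih1 ih2 => exact .pair (ih1 ρ) (ih2 ρ)
  | k => exact .k

/-- Kripke reducibility predicate. -/
def Red : ∀ (A : Tyx ν) {Γ : Ctxx ν}, Tmx Γ A → Prop
  | .atom _, _, t => ∃ n, IsN true n ∧ Eqvx t n
  | .unit, _, _ => True
  | .arrow A B, Γ, t => ∀ (Δ : Ctxx ν) (ρ : Renx Γ Δ) (u : Tmx Δ A), Red A u →
      Red B (.app (t.rename ρ) u)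
  | .prod A B, _, t => Red A (.p1 t) ∧ Red B (.p2 t)

theorem red_eqv {A : Tyx ν} {Γ : Ctxx ν} {t t' : Tmx Γ A} (e : Eqvx t t') (h : Red A t) :
    Red A t' := by
  induction A generalizing Γ with
  | atom x => obtain ⟨n, hn, en⟩ := h; exact ⟨n, hn, e.symm.trans en⟩
  | unit => trivial
  | arrow A B _ ih =>
    intro Δ ρ u hu
    exact ih (.congApp (eqv_rename e ρ) (.refl u)) (h Δ ρ u hu)
  | prod A B ih1 ih2 => exact ⟨ih1 (.congP1 e) h.1, ih2 (.congP2 e) h.2⟩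

theorem red_rename {A : Tyx ν} {Γ Δ : Ctxx ν} {t : Tmx Γ A} (h : Red A t) (ρ : Renx Γ Δ) :
    Red A (t.rename ρ) := by
  induction A generalizing Γ with
  | atom x => obtain ⟨n, hn, en⟩ := h; exact ⟨_, isN_rename hn ρ, eqv_rename en ρ⟩
  | unit => trivial
  | arrow A B _ ih =>
    intro Θ ρ' u hu
    rw [rename_rename]
    exact h Θ _ u hu
  | prod A B ih1 ih2 => exact ⟨ih1 h.1 ρ, ih2 h.2 ρ⟩

theorem red_reify_reflect (A : Tyx ν) :
    (∀ {Γ : Ctxx ν} (t : Tmx Γ A), Red A t → ∃ n, IsN false n ∧ Eqvx t n) ∧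
    (∀ {Γ : Ctxx ν} (t : Tmx Γ A), IsN true t → Red A t) := by
  induction A with
  | atom x =>
    exact ⟨fun t ⟨n, hn, e⟩ => ⟨n, .ne hn, e⟩, fun t h => ⟨t, h, .refl t⟩⟩
  | unit => exact ⟨fun t _ => ⟨.k, .k, .unit t⟩, fun _ _ => trivial⟩
  | arrow A B ihA ihB =>
    refine ⟨fun {Γ} t h => ?_, fun {Γ} t h Δ ρ u hu => ?_⟩
    · obtain ⟨n, hn, e⟩ := ihB.1 _ (h (A :: Γ) (fun _ => Varx.vs) (.var .vz) (ihA.2 _ (.var _)))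
      exact ⟨.lam n, .lam hn, (Eqvx.eta t).symm.trans (.congLam e)⟩
    · obtain ⟨n, hn, e⟩ := ihA.1 u hu
      exact red_eqv (.congApp (.refl _) e.symm) (ihB.2 _ (.app (isN_rename h ρ) hn))
  | prod A B ihA ihB =>
    refine ⟨fun {Γ} t h => ?_, fun {Γ} t h => ⟨ihA.2 _ (.p1 h), ihB.2 _ (.p2 h)⟩⟩
    obtain ⟨n, hn, e⟩ := ihA.1 _ h.1
    obtain ⟨n', hn', e'⟩ := ihB.1 _ h.2
    exact ⟨.pair n n', .pair hn hn', (Eqvx.prodEta t).symm.trans (.congPair e e')⟩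

theorem red_subst {Γ Δ : Ctxx ν} {A : Tyx ν} (t : Tmx Γ A) (θ : Substx Γ Δ)
    (h : ∀ B (v : Varx Γ B), Red B (θ B v)) : Red A (t.subst θ) := by
  induction t generalizing Δ with
  | var v => exact h _ v
  | @app Γ A B f a ih1 ih2 =>
    have := ih1 θ h Δ (fun _ v => v) _ (ih2 θ h)
    rw [rename_eq_subst, subst_var] at this
    exact this
  | @lam Γ A B b ih =>
    intro Θ ρ u hu
    simp only [Tmx.subst, Tmx.rename]
    refine red_eqv (Eqvx.beta _ _).symm ?_
    have : ((b.subst (Substx.ext θ A)).rename (Renx.ext ρ A)).subst1 u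
        = b.subst (Substx.cons u (fun B v => (θ B v).rename ρ)) := by
      rw [← subst_ext_subst1, rename_subst]
      congr 2
      funext B v
      cases v with
      | vz => rfl
      | vs w => exact rename_vs_rename_ext _ _
    rw [this]
    apply ih
    intro B v
    cases v with
    | vz => exact hu
    | vs w => exact red_rename (h _ w) ρ
  | pair a b ih1 ih2 =>
    exact ⟨red_eqv (Eqvx.prodBeta1 _ _).symm (ih1 θ h),
      red_eqv (Eqvx.prodBeta2 _ _).symm (ih2 θ h)⟩
  | p1 a ih => exact (ih θ h).1
  | p2 a ih => exact (ih θ h).2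
  | k => trivial

theorem exists_nf {Γ : Ctxx ν} {A : Tyx ν} (t : Tmx Γ A) : ∃ n, IsN false n ∧ Eqvx t n := by
  have := red_subst t (fun _ v => .var v) (fun B v => (red_reify_reflect B).2 _ (.var v))
  rw [subst_var] at this
  exact (red_reify_reflect A).1 t this

/-! ### Codes of normal forms -/

/-- The level of a variable, counted from the bottom of the context. -/
def lev : ∀ {Γ : Ctxx ν} {A : Tyx ν}, Varx Γ A → ℕ
  | _ :: Γ, _, .vz => Γ.length
  | _ :: _, _, .vs v => lev v

theorem lev_lt {Γ : Ctxx ν} {A : Tyx ν} (v : Varx Γ A) : lev v < Γ.length := by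
  induction v with
  | vz => simp [lev]
  | vs v ih => simp only [lev, List.length_cons]; omega

theorem lev_inj {Γ : Ctxx ν} {A B : Tyx ν} (v : Varx Γ A) (w : Varx Γ B) (h : lev v = lev w) :
    (⟨A, v⟩ : Σ A, Varx Γ A) = ⟨B, w⟩ := by
  induction v with
  | vz =>
    cases w with
    | vz => rfl
    | vs w => have := lev_lt w; simp only [lev] at h; omega
  | vs v ih =>
    cases w with
    | vz => have := lev_lt v; simp only [lev] at h; omega
    | vs w =>
      have := ih w h
      cases this
      rfl

def nd (tag x y : ℕ) : ℕ := Nat.pair tag (Nat.pair x y) + 1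

theorem nd_inj {a b c a' b' c' : ℕ} (h : nd a b c = nd a' b' c') : a = a' ∧ b = b' ∧ c = c' := by
  simpa [nd, Nat.pair_eq_pair] using h

def code : ∀ {Γ : Ctxx ν} {A : Tyx ν}, Tmx Γ A → ℕ
  | _, _, .var v => nd 0 0 (lev v)
  | _, _, .app f a => nd 1 (code f) (code a)
  | _, _, .p1 a => nd 2 0 (code a)
  | _, _, .p2 a => nd 3 0 (code a)
  | _, _, .lam b => nd 4 0 (code b)
  | _, _, .pair a b => nd 5 (code a) (code b)
  | _, _, .k => 0

theorem code_inj {m : Bool} {Γ : Ctxx ν} {A : Tyx ν} {s : Tmx Γ A} (hs : IsN m s)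
    {B : Tyx ν} {t : Tmx Γ B} (ht : IsN m t) (hAB : m = false → A = B)
    (h : code s = code t) : (⟨A, s⟩ : Σ A, Tmx Γ A) = ⟨B, t⟩ := by
  induction hs generalizing B with
  | var v =>
    cases ht with
    | var w =>
      have := lev_inj v w (nd_inj h).2.2
      cases this; rfl
    | app _ _ => have := (nd_inj h).1; omega
    | p1 _ => have := (nd_inj h).1; omega
    | p2 _ => have := (nd_inj h).1; omega
  | app hf ha ih1 ih2 =>
    cases ht with
    | var w => have := (nd_inj h).1; omega
    | app hf' ha' =>
      have e := nd_inj h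
      have h1 := ih1 hf' (by simp) e.2.1
      cases h1
      have h2 := ih2 ha' (by simp) e.2.2
      cases h2
      rfl
    | p1 _ => have := (nd_inj h).1; omega
    | p2 _ => have := (nd_inj h).1; omega
  | p1 ha ih =>
    cases ht with
    | var w => have := (nd_inj h).1; omega
    | app _ _ => have := (nd_inj h).1; omega
    | p1 ha' =>
      have h1 := ih ha' (by simp) (nd_inj h).2.2
      cases h1; rfl
    | p2 _ => have := (nd_inj h).1; omega
  | p2 ha ih =>
    cases ht with
    | var w => have := (nd_inj h).1; omega
    | app _ _ => have := (nd_inj h).1; omega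
    | p2 ha' =>
      have h1 := ih ha' (by simp) (nd_inj h).2.2
      cases h1; rfl
    | p1 _ => have := (nd_inj h).1; omega
  | ne ha ih =>
    have e := hAB rfl
    subst e
    cases ht with
    | ne ha' => exact ih ha' (by simp) h
  | lam hb ih =>
    have e := hAB rfl
    subst e
    cases ht with
    | lam hb' =>
      have h1 := ih hb' (by simp) (nd_inj h).2.2
      cases h1; rfl
  | pair ha hb ih1 ih2 =>
    have e := hAB rfl
    subst e
    cases ht with
    | pair ha' hb' =>
      have e := nd_inj h
      have h1 := ih1 ha' (by simp) e.2.1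
      cases h1
      have h2 := ih2 hb' (by simp) e.2.2
      cases h2; rfl
  | k =>
    have e := hAB rfl
    subst e
    cases ht with
    | k => rfl

/-! ### Finite tuples and numerals -/

/-- The product of `n + 1` copies of `C`. -/
def Pt (C : Tyx ν) : ℕ → Tyx ν
  | 0 => C
  | n + 1 => .prod C (Pt C n)

def proj {C : Tyx ν} {Γ : Ctxx ν} : ∀ (n : ℕ), ℕ → Tmx Γ (Pt C n) → Tmx Γ C
  | 0, _, t => t
  | _ + 1, 0, t => .p1 t
  | n + 1, i + 1, t => proj n i (.p2 t)

def tuple {C : Tyx ν} {Γ : Ctxx ν} : ∀ (n : ℕ), (ℕ → Tmx Γ C) → Tmx Γ (Pt C n)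
  | 0, f => f 0
  | n + 1, f => .pair (f 0) (tuple n (fun i => f (i + 1)))

theorem proj_min {C : Tyx ν} {Γ : Ctxx ν} (n i : ℕ) (t : Tmx Γ (Pt C n)) :
    proj n (min i n) t = proj n i t := by
  induction n generalizing i with
  | zero => rfl
  | succ n ih =>
    cases i with
    | zero => simp [proj]
    | succ i =>
      have : min (i + 1) (n + 1) = min i n + 1 := by omega
      rw [this]
      exact ih i (.p2 t)

theorem proj_congr {C : Tyx ν} {Γ : Ctxx ν} (n i : ℕ) {t t' : Tmx Γ (Pt C n)} (h : Eqvx t t') :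
    Eqvx (proj n i t) (proj n i t') := by
  induction n generalizing i with
  | zero => exact h
  | succ n ih =>
    cases i with
    | zero => exact .congP1 h
    | succ i => exact ih i (.congP2 h)

theorem tuple_congr {C : Tyx ν} {Γ : Ctxx ν} (n : ℕ) {f g : ℕ → Tmx Γ C}
    (h : ∀ i, Eqvx (f i) (g i)) : Eqvx (tuple n f) (tuple n g) := by
  induction n generalizing f g with
  | zero => exact h 0
  | succ n ih => exact .congPair (h 0) (ih fun i => h (i + 1))

theorem proj_tuple {C : Tyx ν} {Γ : Ctxx ν} (n i : ℕ) (f : ℕ → Tmx Γ C) :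
    Eqvx (proj n i (tuple n f)) (f (min i n)) := by
  induction n generalizing i f with
  | zero => simpa [proj, tuple] using Eqvx.refl _
  | succ n ih =>
    cases i with
    | zero => simpa [proj, tuple] using Eqvx.prodBeta1 _ _
    | succ i =>
      have : min (i + 1) (n + 1) = min i n + 1 := by omega
      rw [this]
      exact (proj_congr n i (.prodBeta2 _ _)).trans (ih i (fun i => f (i + 1)))

theorem proj_subst {C : Tyx ν} {Γ Δ : Ctxx ν} (n i : ℕ) (t : Tmx Γ (Pt C n)) (θ : Substx Γ Δ) :
    (proj n i t).subst θ = proj n i (t.subst θ) := by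
  induction n generalizing i with
  | zero => rfl
  | succ n ih =>
    cases i with
    | zero => rfl
    | succ i => exact ih i (.p2 t)

theorem tuple_subst {C : Tyx ν} {Γ Δ : Ctxx ν} (n : ℕ) (f : ℕ → Tmx Γ C) (θ : Substx Γ Δ) :
    (tuple n f).subst θ = tuple n (fun i => (f i).subst θ) := by
  induction n generalizing f with
  | zero => rfl
  | succ n ih => exact congrArg (Tmx.pair _) (ih (fun i => f (i + 1)))

/-- The type of numerals `0, …, N`. -/
abbrev Kt (C : Tyx ν) (N : ℕ) : Tyx ν := .arrow (Pt C N) C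

def num (C : Tyx ν) (N : ℕ) {Γ : Ctxx ν} (i : ℕ) : Tmx Γ (Kt C N) :=
  .lam (proj N i (.var .vz))

theorem num_min (C : Tyx ν) (N : ℕ) {Γ : Ctxx ν} {i j : ℕ} (h : min i N = min j N) :
    num C N (Γ := Γ) i = num C N j := by
  unfold num
  rw [← proj_min N i, h, proj_min]

theorem num_subst (C : Tyx ν) (N : ℕ) {Γ Δ : Ctxx ν} (i : ℕ) (θ : Substx Γ Δ) :
    (num C N i).subst θ = num C N i := by
  simp only [num, Tmx.subst, proj_subst]; rfl

theorem num_rename (C : Tyx ν) (N : ℕ) {Γ Δ : Ctxx ν} (i : ℕ) (ρ : Renx Γ Δ) :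
    (num C N i).rename ρ = num C N i := by
  rw [rename_eq_subst, num_subst]

theorem num_app (C : Tyx ν) (N : ℕ) {Γ : Ctxx ν} (i : ℕ) (f : ℕ → Tmx Γ C) :
    Eqvx (.app (num C N i) (tuple N f)) (f (min i N)) := by
  refine (Eqvx.beta _ _).trans ?_
  rw [Tmx.subst1, proj_subst]
  exact proj_tuple N i f

/-- Binary operations on numerals. -/
def op2 {C : Tyx ν} {N : ℕ} (f : ℕ → ℕ → ℕ) {Γ : Ctxx ν} (s t : Tmx Γ (Kt C N)) :
    Tmx Γ (Kt C N) :=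
  .lam (.app (s.rename (fun _ => Varx.vs)) (tuple N (fun i =>
    .app (t.rename (fun _ => Varx.vs)) (tuple N (fun j => proj N (f i j) (.var .vz))))))

theorem op2_subst {C : Tyx ν} {N : ℕ} (f : ℕ → ℕ → ℕ) {Γ Δ : Ctxx ν} (s t : Tmx Γ (Kt C N))
    (θ : Substx Γ Δ) : (op2 f s t).subst θ = op2 f (s.subst θ) (t.subst θ) := by
  simp only [op2, Tmx.subst, tuple_subst, proj_subst, rename_vs_subst_ext]; rfl

theorem op2_congr {C : Tyx ν} {N : ℕ} (f : ℕ → ℕ → ℕ) {Γ : Ctxx ν} {s s' t t' : Tmx Γ (Kt C N)}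
    (hs : Eqvx s s') (ht : Eqvx t t') : Eqvx (op2 f s t) (op2 f s' t') :=
  .congLam (.congApp (eqv_rename hs _) (tuple_congr N fun _ =>
    .congApp (eqv_rename ht _) (.refl _)))

theorem op2_num {C : Tyx ν} {N : ℕ} (f : ℕ → ℕ → ℕ) {Γ : Ctxx ν} (i j : ℕ) :
    Eqvx (op2 f (num C N (Γ := Γ) i) (num C N j)) (num C N (f (min i N) (min j N))) := by
  unfold op2
  simp only [num_rename]
  refine .congLam ?_
  exact (num_app C N i _).trans (num_app C N j _)

theorem op2_num' {C : Tyx ν} {N : ℕ} (f : ℕ → ℕ → ℕ) {Γ : Ctxx ν} {s t : Tmx Γ (Kt C N)}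
    {i j : ℕ} (hs : Eqvx s (num C N i)) (ht : Eqvx t (num C N j))
    (hf : min (f (min i N) (min j N)) N = min (f i j) N) :
    Eqvx (op2 f s t) (num C N (f i j)) := by
  rw [← num_min C N hf]
  exact (op2_congr f hs ht).trans (op2_num f i j)

theorem nd_sat (N tag i j : ℕ) : min (nd tag (min i N) (min j N)) N = min (nd tag i j) N := by
  have key : ∀ a b, a ≤ nd tag a b ∧ b ≤ nd tag a b := fun a b => by
    have h1 := Nat.left_le_pair a b
    have h2 := Nat.right_le_pair a b
    have h3 := Nat.right_le_pair tag (Nat.pair a b)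
    unfold nd
    omega
  by_cases h : i ≤ N ∧ j ≤ N
  · rw [min_eq_left h.1, min_eq_left h.2]
  · have h1 := key i j
    have h2 := key (min i N) (min j N)
    omega

/-! ### Reification and reflection as terms -/

abbrev Dt (C : Tyx ν) (N : ℕ) : Tyx ν := .arrow (Kt C N) (Kt C N)

abbrev su (C : Tyx ν) (N : ℕ) : ν → Tyx ν := fun _ => Dt C N

mutual
def rei (C : Tyx ν) (N : ℕ) : ∀ (A : Tyx ν) {Γ : Ctxx ν}, Tmx Γ (A.substA (su C N)) →
    Tmx Γ (Kt C N) → Tmx Γ (Kt C N)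
  | .atom _, _, t, l => .app t l
  | .unit, _, _, _ => num C N 0
  | .prod A B, _, t, l => op2 (nd 5) (rei C N A (.p1 t) l) (rei C N B (.p2 t) l)
  | .arrow A B, _, t, l => op2 (nd 4) (num C N 0)
      (rei C N B (.app t (refl C N A (.lam (op2 (nd 0) (num C N 0)
        (l.rename (fun _ => Varx.vs)))))) (op2 (fun i _ => i + 1) l l))
def refl (C : Tyx ν) (N : ℕ) : ∀ (A : Tyx ν) {Γ : Ctxx ν}, Tmx Γ (Dt C N) →
    Tmx Γ (A.substA (su C N))
  | .atom _, _, u => u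
  | .unit, _, _ => .k
  | .prod A B, _, u => .pair
      (refl C N A (.lam (op2 (nd 2) (num C N 0) (.app (u.rename (fun _ => Varx.vs)) (.var .vz)))))
      (refl C N B (.lam (op2 (nd 3) (num C N 0) (.app (u.rename (fun _ => Varx.vs)) (.var .vz)))))
  | .arrow A B, _, u => .lam (refl C N B (.lam (op2 (nd 1)
      (.app ((u.rename (fun _ => Varx.vs)).rename (fun _ => Varx.vs)) (.var .vz))
      (rei C N A (.var (.vs .vz)) (.var .vz)))))
end

theorem rr_subst (C : Tyx ν) (N : ℕ) (A : Tyx ν) :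
    (∀ {Γ Δ : Ctxx ν} (t : Tmx Γ (A.substA (su C N))) (l : Tmx Γ (Kt C N)) (θ : Substx Γ Δ),
      (rei C N A t l).subst θ = rei C N A (t.subst θ) (l.subst θ)) ∧
    (∀ {Γ Δ : Ctxx ν} (u : Tmx Γ (Dt C N)) (θ : Substx Γ Δ),
      (refl C N A u).subst θ = refl C N A (u.subst θ)) := by
  induction A with
  | atom x => exact ⟨fun _ _ _ => rfl, fun _ _ => rfl⟩
  | unit => exact ⟨fun _ _ _ => num_subst _ _ _ _, fun _ _ => rfl⟩
  | prod A B ihA ihB =>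
    refine ⟨fun t l θ => ?_, fun u θ => ?_⟩
    · simp only [rei, op2_subst, ihA.1, ihB.1]; rfl
    · simp only [refl, Tmx.subst, op2_subst, ihA.2, ihB.2, num_subst, rename_vs_subst_ext]; rfl
  | arrow A B ihA ihB =>
    refine ⟨fun t l θ => ?_, fun u θ => ?_⟩
    · simp only [rei, op2_subst, ihB.1, Tmx.subst, ihA.2, num_subst, rename_vs_subst_ext]; rfl
    · simp only [refl, Tmx.subst, op2_subst, ihA.1, ihB.2, rename_vs_subst_ext]; rfl

theorem rr_congr (C : Tyx ν) (N : ℕ) (A : Tyx ν) :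
    (∀ {Γ : Ctxx ν} {t t' : Tmx Γ (A.substA (su C N))} {l l' : Tmx Γ (Kt C N)},
      Eqvx t t' → Eqvx l l' → Eqvx (rei C N A t l) (rei C N A t' l')) ∧
    (∀ {Γ : Ctxx ν} {u u' : Tmx Γ (Dt C N)}, Eqvx u u' →
      Eqvx (refl C N A u) (refl C N A u')) := by
  induction A with
  | atom x => exact ⟨fun h h' => .congApp h h', fun h => h⟩
  | unit => exact ⟨fun _ _ => .refl _, fun _ => .refl _⟩
  | prod A B ihA ihB =>
    refine ⟨fun h h' => ?_, fun h => ?_⟩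
    · simp only [rei]
      exact op2_congr _ (ihA.1 (.congP1 h) h') (ihB.1 (.congP2 h) h')
    · simp only [refl]
      exact .congPair
        (ihA.2 (.congLam (op2_congr _ (.refl _) (.congApp (eqv_rename h _) (.refl _)))))
        (ihB.2 (.congLam (op2_congr _ (.refl _) (.congApp (eqv_rename h _) (.refl _)))))
  | arrow A B ihA ihB =>
    refine ⟨fun h h' => ?_, fun h => ?_⟩
    · simp only [rei]
      exact op2_congr _ (.refl _) (ihB.1 (.congApp h (ihA.2 (.congLam (op2_congr _ (.refl _)
        (eqv_rename h' _))))) (op2_congr _ h' h'))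
    · simp only [refl]
      exact .congLam (ihB.2 (.congLam (op2_congr _ (.congApp (eqv_rename (eqv_rename h _) _)
        (.refl _)) (.refl _))))

/-- The reflection of an application. -/
theorem refl_app (C : Tyx ν) (N : ℕ) (A B : Tyx ν) {Γ : Ctxx ν} (u : Tmx Γ (Dt C N))
    (x : Tmx Γ (A.substA (su C N))) :
    Eqvx (Tmx.app (A := A.substA (su C N)) (B := B.substA (su C N)) (refl C N (.arrow A B) u) x)
      (refl C N B (.lam (op2 (nd 1) (.app (u.rename (fun _ => Varx.vs)) (.var .vz))
        (rei C N A (x.rename (fun _ => Varx.vs)) (.var .vz))))) := by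
  simp only [refl]
  refine (Eqvx.beta _ _).trans ?_
  unfold Tmx.subst1
  rw [(rr_subst C N B).2]
  simp only [Tmx.subst, op2_subst, (rr_subst C N A).1, rename_vs_subst_ext, rename_vs_subst1]
  exact .refl _

/-- Evaluation of a normal form in the term model. -/
theorem eval_nf (C : Tyx ν) (N : ℕ) {Ξ : Ctxx ν} {m : Bool} {Γ : Ctxx ν} {A : Tyx ν}
    {t : Tmx Γ A} (ht : IsN m t) (θ : Substx (Γ.map (Tyx.substA (su C N))) Ξ)
    (hθ : ∀ B (v : Varx Γ B), ∃ u : Tmx Ξ (Dt C N),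
      Eqvx (θ _ (v.substA (su C N))) (refl C N B u) ∧
      ∀ l, Eqvx (.app u (num C N l)) (num C N (nd 0 0 (lev v)))) :
    (m = true → ∃ u : Tmx Ξ (Dt C N), Eqvx ((t.substA (su C N)).subst θ) (refl C N A u) ∧
      Eqvx (.app u (num C N Γ.length)) (num C N (code t))) ∧
    (m = false → Eqvx (rei C N A ((t.substA (su C N)).subst θ) (num C N Γ.length))
      (num C N (code t))) := by
  induction ht with
  | var v =>
    refine ⟨fun _ => ?_, by simp⟩
    obtain ⟨u, h1, h2⟩ := hθ _ v
    exact ⟨u, h1, h2 _⟩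
  | @app Γ A B f a hf ha ih1 ih2 =>
    refine ⟨fun _ => ?_, by simp⟩
    obtain ⟨u, h1, h2⟩ := (ih1 θ hθ).1 rfl
    have h3 := (ih2 θ hθ).2 rfl
    refine ⟨_, (Eqvx.congApp h1 (.refl _)).trans (refl_app C N A B u _), ?_⟩
    refine (Eqvx.beta _ _).trans ?_
    simp only [Tmx.subst1, Tmx.subst, op2_subst, (rr_subst C N A).1, rename_vs_subst1]
    exact op2_num' (nd 1) h2 h3 (nd_sat _ _ _ _)
  | @p1 Γ A B a ha ih =>
    refine ⟨fun _ => ?_, by simp⟩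
    obtain ⟨u, h1, h2⟩ := (ih θ hθ).1 rfl
    simp only [refl] at h1
    refine ⟨_, (Eqvx.congP1 h1).trans (.prodBeta1 _ _), ?_⟩
    refine (Eqvx.beta _ _).trans ?_
    simp only [Tmx.subst1, Tmx.subst, op2_subst, num_subst, rename_vs_subst1]
    exact op2_num' (nd 2) (.refl _) h2 (nd_sat _ _ _ _)
  | @p2 Γ A B a ha ih =>
    refine ⟨fun _ => ?_, by simp⟩
    obtain ⟨u, h1, h2⟩ := (ih θ hθ).1 rfl
    simp only [refl] at h1
    refine ⟨_, (Eqvx.congP2 h1).trans (.prodBeta2 _ _), ?_⟩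
    refine (Eqvx.beta _ _).trans ?_
    simp only [Tmx.subst1, Tmx.subst, op2_subst, num_subst, rename_vs_subst1]
    exact op2_num' (nd 3) (.refl _) h2 (nd_sat _ _ _ _)
  | ne ha ih =>
    refine ⟨by simp, fun _ => ?_⟩
    obtain ⟨u, h1, h2⟩ := (ih θ hθ).1 rfl
    exact (Eqvx.congApp h1 (.refl _)).trans h2
  | @lam Γ A B b hb ih =>
    refine ⟨by simp, fun _ => ?_⟩
    simp only [rei]
    refine op2_num' (nd 4) (.refl _) ?_ (nd_sat _ _ _ _)
    have hs : Eqvx (op2 (fun i _ => i + 1) (num C N (Γ := Ξ) Γ.length) (num C N Γ.length))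
        (num C N (Γ.length + 1)) :=
      op2_num' (fun i _ => i + 1) (.refl _) (.refl _) (by omega)
    refine ((rr_congr C N B).1 (Eqvx.beta _ _) hs).trans ?_
    rw [subst_ext_subst1]
    refine (ih _ ?_).2 rfl
    intro D v
    cases v with
    | vz =>
      refine ⟨_, .refl _, fun l => ?_⟩
      refine (Eqvx.beta _ _).trans ?_
      simp only [Tmx.subst1, op2_subst, num_subst, rename_vs_subst1]
      exact op2_num' (nd 0) (.refl _) (.refl _) (nd_sat _ _ _ _)
    | vs w => exact hθ _ w
  | @pair Γ A B a b ha hb ih1 ih2 =>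
    refine ⟨by simp, fun _ => ?_⟩
    simp only [rei]
    exact op2_num' (nd 5)
      (((rr_congr C N A).1 (.prodBeta1 _ _) (.refl _)).trans ((ih1 θ hθ).2 rfl))
      (((rr_congr C N B).1 (.prodBeta2 _ _) (.refl _)).trans ((ih2 θ hθ).2 rfl))
      (nd_sat _ _ _ _)
  | k => exact ⟨by simp, fun _ => .refl _⟩

/-! ### Separation -/

/-- `s` and `t` can be mapped to `c` and `d` by one term. -/
def Sep {Δ : Ctxx ν} {C : Tyx ν} (c d : Tmx Δ C) {X : Tyx ν} (s t : Tmx [] X) : Prop :=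
  ∃ h : Tmx Δ (.arrow X C), Eqvx (h.app s.wk) c ∧ Eqvx (h.app t.wk) d

theorem sep_closed {A : Tyx ν} (a b : Tmx [] A) (hne : ¬ Eqvx a b) {Δ : Ctxx ν} {C : Tyx ν}
    (c d : Tmx Δ C) : ∃ s : ν → Tyx ν, Sep c d (a.substA s) (b.substA s) := by
  classical
  obtain ⟨n, hn, en⟩ := exists_nf a
  obtain ⟨n', hn', en'⟩ := exists_nf b
  have hcode : code n ≠ code n' := by
    intro h
    have := code_inj hn hn' (fun _ => rfl) h
    cases this
    exact hne (en.trans en'.symm)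
  let N := code n + code n'
  have hev : ∀ (x y : Tmx [] A), IsN false y → Eqvx x y → ∀ f : ℕ → Tmx Δ C, code y ≤ N →
      Eqvx (.app (rei C N A (x.substA (su C N)).wk (num C N 0)) (tuple N f)) (f (code y)) := by
    intro x y hy e f hN
    have h1 : Eqvx (x.substA (su C N)).wk ((y.substA (su C N)).wk (Δ := Δ)) :=
      eqv_rename (eqv_substA _ e) _
    have h2 := (eval_nf C N (Ξ := Δ) hy (fun _ v => Tmx.var (Varx.elim0 v))
      (fun B v => Varx.elim0 v)).2 rfl
    have h3 : (y.substA (su C N)).wk (Δ := Δ)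
        = (y.substA (su C N)).subst (fun _ v => Tmx.var (Varx.elim0 v)) := rename_eq_subst _ _
    refine (Eqvx.congApp (((rr_congr C N A).1 (h1.trans (h3 ▸ .refl _)) (.refl _)).trans h2) (.refl _)).trans ?_
    have := num_app C N (code y) f
    rwa [min_eq_left hN] at this
  let f : ℕ → Tmx Δ C := fun i => if i = code n then c else d
  have hbeta : ∀ x : Tmx [] A, Eqvx
      (Tmx.app (.lam (.app (rei C N A (.var .vz) (num C N 0))
        ((tuple N f).rename (fun _ => Varx.vs)))) (x.substA (su C N)).wk)
      (.app (rei C N A (x.substA (su C N)).wk (num C N 0)) (tuple N f)) := by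
    intro x
    refine (Eqvx.beta _ _).trans ?_
    simp only [Tmx.subst1, Tmx.subst, (rr_subst C N A).1, rename_vs_subst1, num_subst]
    exact .refl _
  refine ⟨su C N, _, (hbeta a).trans ((hev a n hn en f (by omega)).trans ?_),
    (hbeta b).trans ((hev b n' hn' en' f (by omega)).trans ?_)⟩
  · simp only [f, if_true]; exact .refl _
  · simp only [f, if_neg hcode.symm]; exact .refl _

theorem eqv_of_lam {Γ : Ctxx ν} {A B : Tyx ν} {a b : Tmx (A :: Γ) B}
    (h : Eqvx (Tmx.lam a) (Tmx.lam b)) : Eqvx a b := by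
  have key : ∀ x : Tmx (A :: Γ) B,
      Eqvx (.app ((Tmx.lam x).rename (fun _ => Varx.vs)) (.var .vz)) x := by
    intro x
    refine (Eqvx.beta _ _).trans ?_
    rw [Tmx.subst1, subst_rename]
    have : (fun (C : Tyx ν) (v : Varx (A :: Γ) C) => Substx.cons (Tmx.var Varx.vz)
        (fun _ v => Tmx.var v) C (Renx.ext (fun _ => Varx.vs (B := A)) A C v))
        = fun C v => Tmx.var v := by
      funext C v; cases v <;> rfl
    rw [this, subst_var]
    exact .refl _
  exact (key a).symm.trans ((Eqvx.congApp (eqv_rename h _) (.refl _)).trans (key b))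

theorem eqv_of_lamAll {Γ : Ctxx ν} {A : Tyx ν} {a b : Tmx Γ A}
    (h : Eqvx a.lamAll b.lamAll) : Eqvx a b := by
  induction Γ generalizing A with
  | nil => exact h
  | cons B Γ ih => exact eqv_of_lam (ih h)

theorem sep_lamAll (s : ν → Tyx ν) {Δ : Ctxx ν} {C : Tyx ν} (c d : Tmx Δ C) {Γ : Ctxx ν}
    {A : Tyx ν} (a b : Tmx Γ A) (h : Sep c d (a.lamAll.substA s) (b.lamAll.substA s)) :
    Sep c d (a.substA s).lamAll (b.substA s).lamAll := by
  induction Γ generalizing A with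
  | nil => exact h
  | cons B Γ ih => exact ih a.lam b.lam h

end BoehmX

/--
**Theorem 9.1 (analogue of Böhm's Theorem for Λ×).** If `a` and `b` are of the same
type and `a = b` is not provable in Λ×, then for every two terms `c` and `d` of the
same type of Λ× one can construct type-instances `a′` and `b′` of `a` and `b`
respectively, terms `h, h₁, …, hₙ` (`n ≥ 0`), and also find variables `x₁, …, xₘ`
(`m ≥ 0`, here: all the free variables of `a` and `b`, i.e. the context `Γ`) and a
natural number `i` such that `π^i(h λx₁…xₘ.a′)h₁…hₙ = c` and
`π^i(h λx₁…xₘ.b′)h₁…hₙ = d` are provable in Λ×.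
-/
theorem boehm_lambda_products {ν : Type} {Γ : Ctxx ν} {A : Tyx ν}
    (a b : Tmx Γ A) (hne : ¬ Eqvx a b) {Δ : Ctxx ν} {C : Tyx ν} (c d : Tmx Δ C) :
    ∃ (σ : ν → Tyx ν) (G : Tyx ν)
      (h : Tmx Δ (Tyx.arrow (Tyx.arrs (Γ.map (Tyx.substA σ)) (A.substA σ)) G))
      (Bs : List (Tyx ν)) (hs : HListx Δ Bs) (n i : ℕ)
      (ua ub : Tmx Δ (Tyx.arrsR Bs C)),
      PiStep n i (h.app (Tmx.lamAll (a.substA σ)).wk) ua ∧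
      PiStep n i (h.app (Tmx.lamAll (b.substA σ)).wk) ub ∧
      Eqvx (ua.apps hs) c ∧ Eqvx (ub.apps hs) d := by
  obtain ⟨s, hs⟩ := BoehmX.sep_closed a.lamAll b.lamAll
    (fun h => hne (BoehmX.eqv_of_lamAll h)) c d
  obtain ⟨h, h1, h2⟩ := BoehmX.sep_lamAll s c d a b hs
  exact ⟨s, C, h, [], .nil, 1, 1, _, _, .one _, .one _, h1, h2⟩
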